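/- Let Ω be an N×N Hermitian positive definite complex matrix (N ≥ 1) and let c > 0. If Tr[Ω^{-1}] > N/c, then Tr[(I_N + Ω)^{-1}] > 0 and Tr[Ω^{-1}] / Tr[(I_N + Ω)^{-1}] > (1 + c)/c. -/

import Mathlib

open Matrix
open scoped ComplexOrder

/-!
For positive `x` the resolvent identity reads `x⁻¹ - (1 + x)⁻¹ = x⁻¹ (1 + x)⁻¹`, and both factors on
the right decrease in `x`. Applied to the eigenvalues of `Ω`, Chebyshev's sum inequality therefore
gives `T S ≤ N (T - S)` for `T = Tr[Ω⁻¹]` and `S = Tr[(1 + Ω)⁻¹]`, that is, `1 + T / N ≤ T / S`.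
The hypothesis `T > N / c` makes the left side exceed `1 + 1 / c`.
-/

section TraceInv

variable {𝕜 n : Type*} [RCLike 𝕜] [Fintype n] [DecidableEq n] {A : Matrix n n 𝕜}

theorem trace_cfc (hA : A.IsHermitian) (f : ℝ → ℝ) :
    (cfc f A).trace = ∑ i, (f (hA.eigenvalues i) : 𝕜) := by
  rw [hA.cfc_eq, IsHermitian.cfc, Unitary.conjStarAlgAut_apply, trace_mul_cycle,
    Unitary.coe_star_mul_self, one_mul, trace_diagonal]
  rfl

theorem re_trace_cfc (hA : A.IsHermitian) (f : ℝ → ℝ) :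
    RCLike.re (cfc f A).trace = ∑ i, f (hA.eigenvalues i) := by
  rw [trace_cfc hA, ← RCLike.ofReal_sum, RCLike.ofReal_re]

theorem inv_cfc (hA : A.IsHermitian) {f : ℝ → ℝ} (hf : ∀ x ∈ spectrum ℝ A, f x ≠ 0) :
    (cfc f A)⁻¹ = cfc (fun x ↦ (f x)⁻¹) A := by
  rw [nonsing_inv_eq_ringInverse,
    cfc_inv f A hf (finite_real_spectrum.continuousOn f) hA.isSelfAdjoint]

theorem re_trace_cfc_mul_re_trace_cfc_le (hA : A.IsHermitian) {f g : ℝ → ℝ}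
    (hfg : MonovaryOn f g (spectrum ℝ A)) :
    RCLike.re (cfc f A).trace * RCLike.re (cfc g A).trace
      ≤ Fintype.card n * RCLike.re (cfc (fun x ↦ f x * g x) A).trace := by
  have monovary : Monovary (f ∘ hA.eigenvalues) (g ∘ hA.eigenvalues) := fun i j ↦
    hfg (hA.eigenvalues_mem_spectrum_real i) (hA.eigenvalues_mem_spectrum_real j)
  simpa only [re_trace_cfc hA, Function.comp_apply] using monovary.sum_mul_sum_le_card_mul_sum

theorem inv_eq_cfc (hA : A.IsHermitian) (hu : IsUnit A) : A⁻¹ = cfc (fun x : ℝ ↦ x⁻¹) A := by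
  rw [nonsing_inv_eq_ringInverse, cfc_ringInverse_id A hu hA.isSelfAdjoint]

theorem inv_one_add_eq_cfc (hA : A.IsHermitian) (h1 : -1 ∉ spectrum ℝ A) :
    (1 + A)⁻¹ = cfc (fun x : ℝ ↦ (1 + x)⁻¹) A := by
  have one_add_eq : 1 + A = cfc (fun x : ℝ ↦ 1 + x) A := by
    rw [cfc_const_add 1 (fun x ↦ x) A continuousOn_id hA.isSelfAdjoint,
      cfc_id' ℝ A hA.isSelfAdjoint, map_one]
  rw [one_add_eq]
  exact inv_cfc hA fun x hx h ↦ h1 (eq_neg_of_add_eq_zero_right h ▸ hx)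

theorem spectrum_real_subset_Ioi_of_posDef (hA : A.PosDef) : spectrum ℝ A ⊆ Set.Ioi 0 := by
  rw [hA.isHermitian.spectrum_real_eq_range_eigenvalues]
  exact Set.range_subset_iff.mpr hA.eigenvalues_pos

theorem re_trace_inv_one_add_pos [Nonempty n] (hA : A.PosDef) :
    0 < RCLike.re ((1 + A)⁻¹).trace :=
  (RCLike.pos_iff.mp (PosDef.one.add hA).inv.trace_pos).1

theorem re_trace_inv_mul_re_trace_inv_one_add_le (hA : A.PosDef) :
    RCLike.re (A⁻¹).trace * RCLike.re ((1 + A)⁻¹).trace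
      ≤ Fintype.card n * (RCLike.re (A⁻¹).trace - RCLike.re ((1 + A)⁻¹).trace) := by
  have pos : ∀ x ∈ spectrum ℝ A, 0 < x := spectrum_real_subset_Ioi_of_posDef hA
  have inv_eq := inv_eq_cfc hA.isHermitian hA.isUnit
  have inv_one_add_eq := inv_one_add_eq_cfc hA.isHermitian fun h ↦ by linarith [pos _ h]
  have antitone_inv : AntitoneOn (fun x : ℝ ↦ x⁻¹) (spectrum ℝ A) := fun x hx y _ hxy ↦
    inv_anti₀ (pos x hx) hxy
  have antitone_inv_one_add : AntitoneOn (fun x : ℝ ↦ (1 + x)⁻¹) (spectrum ℝ A) :=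
    fun x hx y _ hxy ↦ inv_anti₀ (add_pos one_pos (pos x hx)) (by gcongr)
  have resolvent : cfc (fun x : ℝ ↦ x⁻¹ * (1 + x)⁻¹) A = A⁻¹ - (1 + A)⁻¹ := by
    rw [inv_eq, inv_one_add_eq,
      ← cfc_sub _ _ A (finite_real_spectrum.continuousOn _) (finite_real_spectrum.continuousOn _)]
    refine cfc_congr fun x hx ↦ ?_
    have := pos x hx
    field_simp
    ring
  rw [← map_sub, ← trace_sub, ← resolvent, inv_eq, inv_one_add_eq]
  exact re_trace_cfc_mul_re_trace_cfc_le hA.isHermitian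
    (antitone_inv.monovaryOn antitone_inv_one_add)

theorem one_add_re_trace_inv_div_card_le [Nonempty n] (hA : A.PosDef) :
    1 + RCLike.re (A⁻¹).trace / Fintype.card n
      ≤ RCLike.re (A⁻¹).trace / RCLike.re ((1 + A)⁻¹).trace := by
  have card_pos : (0 : ℝ) < Fintype.card n := mod_cast Fintype.card_pos
  rw [le_div_iff₀ (re_trace_inv_one_add_pos hA), one_add_div card_pos.ne', div_mul_eq_mul_div,
    div_le_iff₀ card_pos]
  linarith [re_trace_inv_mul_re_trace_inv_one_add_le hA]

theorem stmt17_general (hA : A.PosDef) {c : ℝ} (hc : c ≠ 0)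
    (h : Fintype.card n / c < RCLike.re (A⁻¹).trace) :
    0 < RCLike.re ((1 + A)⁻¹).trace ∧
      (1 + c) / c < RCLike.re (A⁻¹).trace / RCLike.re ((1 + A)⁻¹).trace := by
  obtain _ | _ := isEmpty_or_nonempty n
  · simp at h
  refine ⟨re_trace_inv_one_add_pos hA, ?_⟩
  calc (1 + c) / c = 1 + Fintype.card n / c / Fintype.card n := by field_simp; ring
    _ < 1 + RCLike.re (A⁻¹).trace / Fintype.card n := by gcongr
    _ ≤ RCLike.re (A⁻¹).trace / RCLike.re ((1 + A)⁻¹).trace := one_add_re_trace_inv_div_card_le hA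

end TraceInv

/-- If `Ω` is Hermitian positive definite with `Tr[Ω⁻¹] > N/c` for some `c > 0`,
then `Tr[(I + Ω)⁻¹] > 0` and `Tr[Ω⁻¹]/Tr[(I + Ω)⁻¹] > (1 + c)/c`. -/
theorem stmt17 (N : ℕ) (hN : 1 ≤ N) (Ω : Matrix (Fin N) (Fin N) ℂ)
    (hΩ : Ω.PosDef) (c : ℝ) (hc : 0 < c)
    (h : (N : ℝ) / c < ((Ω⁻¹).trace).re) :
    0 < (((1 + Ω)⁻¹).trace).re ∧
      (1 + c) / c < ((Ω⁻¹).trace).re / (((1 + Ω)⁻¹).trace).re :=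
  stmt17_general hΩ hc.ne' (by rwa [Fintype.card_fin])
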